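/- Let F ⊆ E be a flat, R a face of 𝒜_F, and 𝒻 : F = F_0 ⊊ F_1 ⊊ ⋯ ⊊ F_k = E a flag of flats based at F of length k. Then the dimension of the linear span of the cone C^{(F,R)}_𝒻 in W_{F,R} equals d + k − finrank(span{a_e : e ∈ F^0(R)}), i.e. dim C^{(F,R)}_𝒻 = d + ℓ(𝒻) − codim R. (Dimension formula of Theorem 6.1 for the cones of Trop(𝔐_𝒜).) -/

import Mathlib

open Set Submodule

noncomputable section

variable {E : Type*} [Fintype E] [DecidableEq E]
variable {M : Type*} [NormedAddCommGroup M] [NormedSpace ℝ M] [FiniteDimensional ℝ M]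

/-- The positive closed halfspace `H_e^+` of the hyperplane `H_e`. -/
def Hplus (a : E → (M →ₗ[ℝ] ℝ)) (r : E → ℝ) (e : E) : Set M := {m | a e m + r e ≤ 0}

/-- The negative closed halfspace `H_e^-` of the hyperplane `H_e`. -/
def Hminus (a : E → (M →ₗ[ℝ] ℝ)) (r : E → ℝ) (e : E) : Set M := {m | 0 ≤ a e m + r e}

/-- `R` is a face of the localization `𝒜_S`: a nonempty fiber of the sign map
`M → SignType^S`, `m ↦ (sign (a e m + r e))_{e ∈ S}`. -/
def IsFace (a : E → (M →ₗ[ℝ] ℝ)) (r : E → ℝ) (S : Set E) (R : Set M) : Prop :=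
  ∃ m₀ : M, R = {m : M | ∀ e ∈ S, SignType.sign (a e m + r e) = SignType.sign (a e m₀ + r e)}

/-- `S^+(R)`: the elements `e ∈ S` with `R ⊆ H_e^+`. -/
def posSet (a : E → (M →ₗ[ℝ] ℝ)) (r : E → ℝ) (S : Set E) (R : Set M) : Set E :=
  {e ∈ S | R ⊆ Hplus a r e}

/-- `S^-(R)`: the elements `e ∈ S` with `R ⊆ H_e^-`. -/
def negSet (a : E → (M →ₗ[ℝ] ℝ)) (r : E → ℝ) (S : Set E) (R : Set M) : Set E :=
  {e ∈ S | R ⊆ Hminus a r e}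

/-- `S^0(R) = S^+(R) ∩ S^-(R)`. -/
def zeroSet (a : E → (M →ₗ[ℝ] ℝ)) (r : E → ℝ) (S : Set E) (R : Set M) : Set E :=
  posSet a r S R ∩ negSet a r S R

/-- The linear map `(E → ℝ) → N` sending the basis vector `δ_e` to `a_e`. -/
def toN (a : E → (M →ₗ[ℝ] ℝ)) : (E → ℝ) →ₗ[ℝ] (M →ₗ[ℝ] ℝ) :=
  Fintype.linearCombination ℝ a

/-- `Λ`, the kernel of `(E → ℝ) → N`. -/
def Lam (a : E → (M →ₗ[ℝ] ℝ)) : Submodule ℝ (E → ℝ) := LinearMap.ker (toN a)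

/-- The antidiagonal embedding `∇ : x ↦ (x, -x)`. -/
def nabla : (E → ℝ) →ₗ[ℝ] (E → ℝ) × (E → ℝ) :=
  LinearMap.prod LinearMap.id (-LinearMap.id)

/-- `∇(Λ)`. -/
def nabLam (a : E → (M →ₗ[ℝ] ℝ)) : Submodule ℝ ((E → ℝ) × (E → ℝ)) :=
  (Lam a).map nabla

/-- The Lawrence cocharacter space `Ñ = ((E → ℝ) × (E → ℝ))/∇(Λ)`. -/
abbrev tildeN (a : E → (M →ₗ[ℝ] ℝ)) : Type _ := ((E → ℝ) × (E → ℝ)) ⧸ nabLam a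

/-- `ρ_e^+`, the image of `(δ_e, 0)` in `Ñ`. -/
def rhoP (a : E → (M →ₗ[ℝ] ℝ)) (e : E) : tildeN a :=
  Submodule.Quotient.mk (Pi.single e 1, 0)

/-- `ρ_e^-`, the image of `(0, δ_e)` in `Ñ`. -/
def rhoM (a : E → (M →ₗ[ℝ] ℝ)) (e : E) : tildeN a :=
  Submodule.Quotient.mk (0, Pi.single e 1)

/-- The cone `σ_{S,R} ⊆ Ñ` generated by `{ρ_e^+ : e ∈ S^+(R)} ∪ {ρ_f^- : f ∈ S^-(R)}`
together with `0`: the set of all nonnegative linear combinations of these generators. -/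
def sigmaCone (a : E → (M →ₗ[ℝ] ℝ)) (r : E → ℝ) (S : Set E) (R : Set M) : Set (tildeN a) :=
  {v | ∃ c d : E → ℝ, (∀ e, 0 ≤ c e) ∧ (∀ e, 0 ≤ d e) ∧
    v = ∑ e, (posSet a r S R).indicator c e • rhoP a e
      + ∑ e, (negSet a r S R).indicator d e • rhoM a e}

/-- The addition map `(x, y) ↦ x + y` on `(E → ℝ) × (E → ℝ)`. -/
def addMap (E : Type*) [Fintype E] : ((E → ℝ) × (E → ℝ)) →ₗ[ℝ] (E → ℝ) :=
  LinearMap.fst ℝ (E → ℝ) (E → ℝ) + LinearMap.snd ℝ (E → ℝ) (E → ℝ)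

lemma nabLam_le_ker_addMap (a : E → (M →ₗ[ℝ] ℝ)) :
    nabLam a ≤ LinearMap.ker (addMap E) := by
  rintro v ⟨x, hx, rfl⟩
  simp [addMap, nabla]

/-- The map `Φ̄ : Ñ → (E → ℝ)` induced by `(x, y) ↦ x + y`; it satisfies
`Φ̄(ρ_e^+) = Φ̄(ρ_e^-) = δ_e`. -/
def Phibar (a : E → (M →ₗ[ℝ] ℝ)) : tildeN a →ₗ[ℝ] (E → ℝ) :=
  (nabLam a).liftQ (addMap E) (nabLam_le_ker_addMap a)

lemma Phibar_rhoP (a : E → (M →ₗ[ℝ] ℝ)) (e : E) :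
    Phibar a (rhoP a e) = Pi.single e 1 := by
  simp [Phibar, rhoP, addMap]

lemma Phibar_rhoM (a : E → (M →ₗ[ℝ] ℝ)) (e : E) :
    Phibar a (rhoM a e) = Pi.single e 1 := by
  simp [Phibar, rhoM, addMap]

/-- `ℝ^F`, the span of the coordinate vectors `δ_e` for `e ∈ F`. -/
def RF (E : Type*) [Fintype E] [DecidableEq E] (F : Set E) : Submodule ℝ (E → ℝ) :=
  Submodule.span ℝ ((fun e => Pi.single e (1 : ℝ)) '' F)

/-- The linear span of the cone `σ_{F,R}` in `Ñ`. -/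
def spanSigma (a : E → (M →ₗ[ℝ] ℝ)) (r : E → ℝ) (F : Set E) (R : Set M) :
    Submodule ℝ (tildeN a) :=
  Submodule.span ℝ (sigmaCone a r F R)

/-- `W_{F,R} = Ñ / span(σ_{F,R})`. -/
abbrev Wspace (a : E → (M →ₗ[ℝ] ℝ)) (r : E → ℝ) (F : Set E) (R : Set M) : Type _ :=
  tildeN a ⧸ spanSigma a r F R

/-- The quotient map `π_{F,R} : Ñ → W_{F,R}`. -/
def piFR (a : E → (M →ₗ[ℝ] ℝ)) (r : E → ℝ) (F : Set E) (R : Set M) :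
    tildeN a →ₗ[ℝ] Wspace a r F R :=
  (spanSigma a r F R).mkQ

lemma spanSigma_le_ker (a : E → (M →ₗ[ℝ] ℝ)) (r : E → ℝ) (F : Set E) (R : Set M) :
    spanSigma a r F R ≤ LinearMap.ker ((RF E F).mkQ ∘ₗ Phibar a) := by
  rw [spanSigma, Submodule.span_le]
  rintro v ⟨c, d, hc, hd, rfl⟩
  simp only [SetLike.mem_coe, LinearMap.mem_ker, LinearMap.comp_apply]
  rw [Submodule.mkQ_apply, Submodule.Quotient.mk_eq_zero, map_add, map_sum, map_sum]
  simp only [map_smul]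
  apply Submodule.add_mem
  · apply Submodule.sum_mem
    intro e _
    by_cases he : e ∈ posSet a r F R
    · rw [Set.indicator_of_mem he]
      exact Submodule.smul_mem _ _
        (by rw [Phibar_rhoP]; exact Submodule.subset_span ⟨e, he.1, rfl⟩)
    · rw [Set.indicator_of_notMem he, zero_smul]
      exact Submodule.zero_mem _
  · apply Submodule.sum_mem
    intro e _
    by_cases he : e ∈ negSet a r F R
    · rw [Set.indicator_of_mem he]
      exact Submodule.smul_mem _ _
        (by rw [Phibar_rhoM]; exact Submodule.subset_span ⟨e, he.1, rfl⟩)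
    · rw [Set.indicator_of_notMem he, zero_smul]
      exact Submodule.zero_mem _

/-- The induced surjection `Φ̄_{F,R} : W_{F,R} → (E → ℝ)/ℝ^F`. -/
def PhibarFR (a : E → (M →ₗ[ℝ] ℝ)) (r : E → ℝ) (F : Set E) (R : Set M) :
    Wspace a r F R →ₗ[ℝ] ((E → ℝ) ⧸ RF E F) :=
  (spanSigma a r F R).liftQ ((RF E F).mkQ ∘ₗ Phibar a) (spanSigma_le_ker a r F R)

/-- `F ⊆ E` is a flat of the configuration `a`. -/
def IsFlat (a : E → (M →ₗ[ℝ] ℝ)) (F : Set E) : Prop :=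
  F = {e : E | a e ∈ Submodule.span ℝ (a '' F)}

/-- The Bergman cone of a flag `𝒻 : F = F_0 ⊊ F_1 ⊊ ⋯ ⊊ F_k = E`:
`{c_1 δ_{F_1} + ⋯ + c_{k-1} δ_{F_{k-1}} + c δ_E : c_1, …, c_{k-1} ≥ 0, c ∈ ℝ} ⊆ ℝ^E`. -/
def bergCone {E : Type*} [Fintype E] (k : ℕ) (flag : Fin (k + 1) → Set E) : Set (E → ℝ) :=
  {v | ∃ c : Fin (k + 1) → ℝ, c 0 = 0 ∧ (∀ i : Fin (k + 1), 0 < i.val → i.val < k → 0 ≤ c i) ∧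
    v = ∑ i : Fin (k + 1), c i • (flag i).indicator (1 : E → ℝ)}

/-- The cone `C^{(F,R)}_𝒻 = Φ̄_{F,R}⁻¹(β_𝒻) ⊆ W_{F,R}` of `Trop(𝔐_𝒜)`, where
`β_𝒻 ⊆ (E → ℝ)/ℝ^F` is the image of the Bergman cone of the flag `𝒻`. -/
def Ccone (a : E → (M →ₗ[ℝ] ℝ)) (r : E → ℝ) (F : Set E) (R : Set M)
    (k : ℕ) (flag : Fin (k + 1) → Set E) : Set (Wspace a r F R) :=
  PhibarFR a r F R ⁻¹' ((RF E F).mkQ '' bergCone k flag)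

/-!
The map `Φ̄_{F,R}` is surjective, so `dim C = dim span β + dim ker Φ̄_{F,R}`. Modulo `ℝ^F` the
indicators of `F_1, …, F_k` are linearly independent, because each flag member has an element
outside the previous one and outside `F`; this gives `dim span β = k`.

For the kernel, every `δ_e` with `e ∈ F` lifts along `Φ̄` to `ρ_e^+` or `ρ_e^-` in `span σ_{F,R}`,
so `ker Φ̄_{F,R}` is the image of `ker Φ̄ = {[(x, -x)]}`. The span of `σ_{F,R}` is the image of
`ℝ^{F^+} × ℝ^{F^-}`, hence `[(x, -x)]` lies in it iff some `x - λ` with `λ ∈ Λ` is supported on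
`F^+ ∩ F^- = F^0`, i.e. iff the image of `x` in `N` lies in the span of `{a_e : e ∈ F^0}`.
Therefore `ker Φ̄_{F,R}` is the span of all the `a_e` modulo the span of those with `e ∈ F^0`.
-/

section Submodules

variable {A V W ι : Type*} [Ring A] [AddCommGroup V] [Module A V] [AddCommGroup W] [Module A W]

lemma comap_map_sup (f : V →ₗ[A] W) (p : Submodule A V) (q : Submodule A W) :
    comap f (map f p ⊔ q) = p ⊔ comap f q := by
  have h := comap_map_sup_of_comap_le (f := f) (p := p ⊔ comap f q) (q := q) le_sup_right
  rwa [Submodule.map_sup, sup_assoc, sup_eq_right.2 (map_comap_le f q)] at h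

lemma linearIndependent_of_triangular_dual [NoZeroDivisors A] [LinearOrder ι] {v : ι → V}
    (φ : ι → V →ₗ[A] A) (hdiag : ∀ i, φ i (v i) ≠ 0) (hlt : ∀ i j, j < i → φ i (v j) = 0) :
    LinearIndependent A v := by
  rw [linearIndependent_iff]
  intro c hc
  by_contra hne
  have hsupp : c.support.Nonempty := Finsupp.support_nonempty_iff.2 hne
  set i := c.support.max' hsupp
  have hi : i ∈ c.support := c.support.max'_mem hsupp
  have hsum : ∑ j ∈ c.support, c j * φ i (v j) = c i * φ i (v i) := by
    refine Finset.sum_eq_single i (fun j hj hji ↦ ?_) fun h ↦ (h hi).elim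
    rw [hlt i j (lt_of_le_of_ne (c.support.le_max' j hj) hji), mul_zero]
  have hzero : ∑ j ∈ c.support, c j * φ i (v j) = 0 := by
    simpa [Finsupp.linearCombination_apply, Finsupp.sum] using congrArg (φ i) hc
  exact mul_ne_zero (Finsupp.mem_support_iff.1 hi) (hdiag i) (hsum ▸ hzero)

lemma finrank_comap_of_le_range {K V W : Type*} [DivisionRing K] [AddCommGroup V] [Module K V]
    [AddCommGroup W] [Module K W] [FiniteDimensional K V] {f : V →ₗ[K] W} {S : Submodule K W}
    (hS : S ≤ LinearMap.range f) :
    Module.finrank K (S.comap f) = Module.finrank K S + Module.finrank K (LinearMap.ker f) := by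
  have hker : LinearMap.ker f ≤ S.comap f := LinearMap.ker_le_comap f
  rw [← LinearMap.finrank_range_add_finrank_ker (f.domRestrict (S.comap f)),
    LinearMap.range_domRestrict, map_comap_eq_self hS, LinearMap.ker_domRestrict,
    ← (submoduleOfEquivOfLe hker).finrank_eq, submoduleOf]

end Submodules

section StandardVectors

lemma single_one_nonneg {A ι : Type*} [Zero A] [One A] [Preorder A] [ZeroLEOneClass A]
    [DecidableEq ι] (i j : ι) : 0 ≤ (Pi.single i 1 : ι → A) j := by
  have h : (0 : ι → A) ≤ Pi.single i 1 := Pi.single_nonneg.2 zero_le_one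
  exact h j

variable {A V : Type*} [Semiring A] [AddCommMonoid V] [Module A V]

omit [DecidableEq E] in
lemma sum_indicator_smul_mem_span (S : Set E) (c : E → A) (v : E → V) :
    ∑ e, S.indicator c e • v e ∈ span A (v '' S) := by
  refine sum_mem fun e _ ↦ ?_
  by_cases he : e ∈ S
  · exact smul_mem _ _ (subset_span (mem_image_of_mem v he))
  · rw [indicator_of_notMem he, zero_smul]
    exact zero_mem _

lemma sum_indicator_single_smul {S : Set E} {e : E} (he : e ∈ S) (v : E → V) :
    ∑ f, S.indicator (Pi.single e (1 : A)) f • v f = v e := by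
  have hsingle : S.indicator (Pi.single e (1 : A)) = Pi.single e 1 :=
    indicator_eq_self.2 <| Pi.support_single_subset.trans (singleton_subset_iff.2 he)
  simp [hsingle, Pi.single_apply]

end StandardVectors

section CoordinateSubspaces

lemma mem_RF {S : Set E} {x : E → ℝ} : x ∈ RF E S ↔ ∀ e ∉ S, x e = 0 := by
  have hbasis : (fun e ↦ Pi.single e (1 : ℝ)) = ⇑(Pi.basisFun ℝ E) :=
    funext fun e ↦ (Pi.basisFun_apply ℝ E e).symm
  rw [RF, hbasis]
  exact Pi.mem_spanSubset_iff

lemma comap_nabla_prod_RF (S T : Set E) :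
    ((RF E S).prod (RF E T)).comap nabla = RF E (S ∩ T) := by
  ext x
  simp only [mem_comap, nabla, LinearMap.prod_apply, Function.prod_apply, LinearMap.id_apply,
    LinearMap.neg_apply, Submodule.mem_prod, Submodule.neg_mem_iff, mem_RF, mem_inter_iff,
    not_and_or, or_imp, forall_and]

end CoordinateSubspaces

section BergmanCone

omit [DecidableEq E] in
lemma span_bergCone (k : ℕ) (flag : Fin (k + 1) → Set E) :
    span ℝ (bergCone k flag) =
      span ℝ (range fun i : Fin k ↦ (flag i.succ).indicator (1 : E → ℝ)) := by
  refine le_antisymm (span_le.2 ?_) (span_le.2 ?_)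
  · rintro _ ⟨c, hc, -, rfl⟩
    rw [Fin.sum_univ_succ, hc, zero_smul, zero_add]
    exact sum_mem fun i _ ↦ smul_mem _ _ (subset_span (mem_range_self i))
  · rintro _ ⟨i, rfl⟩
    refine subset_span ⟨Pi.single i.succ 1, ?_, fun j _ _ ↦ ?_, ?_⟩
    · exact Pi.single_eq_of_ne (Fin.succ_ne_zero i).symm _
    · exact single_one_nonneg _ j
    · simp [Pi.single_apply]

lemma linearIndependent_mkQ_indicator {F : Set E} {k : ℕ} {flag : Fin (k + 1) → Set E}
    (hF : F ⊆ flag 0) (hmono : StrictMono flag) :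
    LinearIndependent ℝ
      fun i : Fin k ↦ (RF E F).mkQ ((flag i.succ).indicator (1 : E → ℝ)) := by
  choose e he_mem he_notMem using fun i : Fin k ↦
    exists_of_ssubset (hmono (Fin.castSucc_lt_succ (i := i)))
  have he_F (i : Fin k) : e i ∉ F := fun h ↦
    he_notMem i (hmono.monotone (Fin.zero_le _) (hF h))
  have hproj (i : Fin k) : RF E F ≤ LinearMap.ker (LinearMap.proj (R := ℝ) (e i)) :=
    fun x hx ↦ mem_RF.1 hx (e i) (he_F i)
  refine linearIndependent_of_triangular_dual
    (fun i ↦ (RF E F).liftQ (LinearMap.proj (e i)) (hproj i)) (fun i ↦ ?_) fun i j hji ↦ ?_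
  · simp [he_mem i]
  · have hle : flag j.succ ⊆ flag i.castSucc := hmono.monotone (Fin.succ_le_castSucc_iff.2 hji)
    simp [indicator_of_notMem (notMem_subset hle (he_notMem i))]

lemma finrank_span_mkQ_image_bergCone {F : Set E} {k : ℕ} {flag : Fin (k + 1) → Set E}
    (hF : F ⊆ flag 0) (hmono : StrictMono flag) :
    Module.finrank ℝ (span ℝ ((RF E F).mkQ '' bergCone k flag)) = k := by
  rw [span_image, span_bergCone, ← span_image, ← range_comp]
  exact (finrank_span_eq_card (linearIndependent_mkQ_indicator hF hmono)).trans
    (Fintype.card_fin k)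

end BergmanCone

section Configuration

omit [FiniteDimensional ℝ M]

omit [DecidableEq E] in
lemma range_toN (a : E → (M →ₗ[ℝ] ℝ)) : LinearMap.range (toN a) = span ℝ (range a) :=
  Fintype.range_linearCombination ℝ a

lemma map_toN_RF (a : E → (M →ₗ[ℝ] ℝ)) (S : Set E) :
    (RF E S).map (toN a) = span ℝ (a '' S) := by
  rw [RF, map_span, image_image]
  simp [toN, Fintype.linearCombination_apply_single]

lemma comap_toN_span_image (a : E → (M →ₗ[ℝ] ℝ)) (S : Set E) :
    (span ℝ (a '' S)).comap (toN a) = RF E S ⊔ Lam a := by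
  rw [← map_toN_RF, comap_map_eq, Lam]

omit [Fintype E] [DecidableEq E] in
lemma IsFace.subset_posSet_union_negSet {a : E → (M →ₗ[ℝ] ℝ)} {r : E → ℝ} {S : Set E}
    {R : Set M} (hR : IsFace a r S R) : S ⊆ posSet a r S R ∪ negSet a r S R := by
  obtain ⟨m₀, rfl⟩ := hR
  intro e he
  rcases le_total (a e m₀ + r e) 0 with h | h
  · exact .inl ⟨he, fun m hm ↦ sign_nonpos_iff.1 (hm e he ▸ sign_nonpos_iff.2 h)⟩
  · exact .inr ⟨he, fun m hm ↦ sign_nonneg_iff.1 (hm e he ▸ sign_nonneg_iff.2 h)⟩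

lemma spanSigma_eq_span (a : E → (M →ₗ[ℝ] ℝ)) (r : E → ℝ) (F : Set E) (R : Set M) :
    spanSigma a r F R = span ℝ (rhoP a '' posSet a r F R ∪ rhoM a '' negSet a r F R) := by
  refine le_antisymm (span_le.2 ?_) (span_le.2 (union_subset ?_ ?_))
  · rintro _ ⟨c, d, -, -, rfl⟩
    rw [span_union]
    exact add_mem (mem_sup_left (sum_indicator_smul_mem_span _ c _))
      (mem_sup_right (sum_indicator_smul_mem_span _ d _))
  · rintro _ ⟨e, he, rfl⟩
    refine subset_span ⟨Pi.single e 1, 0, single_one_nonneg e, fun _ ↦ le_rfl, ?_⟩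
    simp [sum_indicator_single_smul he]
  · rintro _ ⟨e, he, rfl⟩
    refine subset_span ⟨0, Pi.single e 1, fun _ ↦ le_rfl, single_one_nonneg e, ?_⟩
    simp [sum_indicator_single_smul he]

lemma spanSigma_eq_map_prod (a : E → (M →ₗ[ℝ] ℝ)) (r : E → ℝ) (F : Set E) (R : Set M) :
    spanSigma a r F R =
      ((RF E (posSet a r F R)).prod (RF E (negSet a r F R))).map (nabLam a).mkQ := by
  rw [spanSigma_eq_span, RF, RF, ← LinearMap.span_inl_union_inr, map_span, image_union,
    image_image, image_image, image_image, image_image]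
  rfl

/-- The map `x ↦ [(x, -x)]` from `ℝ^E` to `Ñ`. Its kernel is `Λ`, so it embeds `ℝ^E / Λ`, the span
of the `a_e` in `N`, into `Ñ`; the image is `ker Φ̄`. -/
def nablaBar (a : E → (M →ₗ[ℝ] ℝ)) : (E → ℝ) →ₗ[ℝ] tildeN a :=
  (nabLam a).mkQ ∘ₗ nabla

lemma comap_nablaBar_spanSigma (a : E → (M →ₗ[ℝ] ℝ)) (r : E → ℝ) (F : Set E) (R : Set M) :
    (spanSigma a r F R).comap (nablaBar a) =
      (span ℝ (a '' zeroSet a r F R)).comap (toN a) := by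
  rw [nablaBar, comap_comp, spanSigma_eq_map_prod, comap_map_mkQ, nabLam, comap_map_sup,
    comap_nabla_prod_RF, comap_toN_span_image, sup_comm, zeroSet]

end Configuration

section Projection

variable (a : E → (M →ₗ[ℝ] ℝ)) (r : E → ℝ)

lemma range_nablaBar : LinearMap.range (nablaBar a) = LinearMap.ker (Phibar a) := by
  have hker : LinearMap.range nabla = LinearMap.ker (addMap E) := by
    ext ⟨x, y⟩
    simp [nabla, addMap, add_eq_zero_iff_neg_eq]
  rw [nablaBar, LinearMap.range_comp, hker, Phibar, ker_liftQ]

lemma PhibarFR_surjective (F : Set E) (R : Set M) : Function.Surjective (PhibarFR a r F R) := by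
  rw [← LinearMap.range_eq_top, PhibarFR, range_liftQ, LinearMap.range_eq_top]
  refine (mkQ_surjective _).comp fun x ↦ ⟨(nabLam a).mkQ (x, 0), ?_⟩
  simp [Phibar, addMap]

variable {F : Set E} {R : Set M}

lemma map_Phibar_spanSigma (hR : F ⊆ posSet a r F R ∪ negSet a r F R) :
    (spanSigma a r F R).map (Phibar a) = RF E F := by
  have hF : posSet a r F R ∪ negSet a r F R = F :=
    (union_subset (sep_subset _ _) (sep_subset _ _)).antisymm hR
  rw [spanSigma_eq_span, map_span, image_union, image_image, image_image]
  simp only [Phibar_rhoP, Phibar_rhoM]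
  rw [← image_union, hF, RF]

lemma ker_PhibarFR (hR : F ⊆ posSet a r F R ∪ negSet a r F R) :
    LinearMap.ker (PhibarFR a r F R) = LinearMap.range (piFR a r F R ∘ₗ nablaBar a) :=
  calc LinearMap.ker (PhibarFR a r F R)
    _ = ((RF E F).comap (Phibar a)).map (piFR a r F R) := by
      rw [PhibarFR, ker_liftQ, LinearMap.ker_comp, ker_mkQ, piFR]
    _ = (spanSigma a r F R ⊔ LinearMap.ker (Phibar a)).map (piFR a r F R) := by
      rw [← map_Phibar_spanSigma a r hR, comap_map_eq]
    _ = (LinearMap.ker (Phibar a)).map (piFR a r F R) := by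
      rw [Submodule.map_sup, piFR, mkQ_map_self, bot_sup_eq]
    _ = LinearMap.range (piFR a r F R ∘ₗ nablaBar a) := by
      rw [LinearMap.range_comp, range_nablaBar]

lemma finrank_ker_PhibarFR_add (hR : F ⊆ posSet a r F R ∪ negSet a r F R) :
    Module.finrank ℝ (LinearMap.ker (PhibarFR a r F R)) +
        Module.finrank ℝ (span ℝ (a '' zeroSet a r F R)) =
      Module.finrank ℝ (span ℝ (range a)) := by
  have hker : LinearMap.ker (piFR a r F R ∘ₗ nablaBar a) =
      (span ℝ (a '' zeroSet a r F R)).comap (toN a) := by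
    rw [LinearMap.ker_comp, piFR, ker_mkQ, comap_nablaBar_spanSigma]
  have hle : span ℝ (a '' zeroSet a r F R) ≤ LinearMap.range (toN a) := by
    rw [range_toN]
    exact span_mono (image_subset_range _ _)
  have hrank := (piFR a r F R ∘ₗ nablaBar a).finrank_range_add_finrank_ker
  rw [← ker_PhibarFR a r hR, hker, finrank_comap_of_le_range hle] at hrank
  have hrank' := (toN a).finrank_range_add_finrank_ker
  rw [range_toN] at hrank'
  omega

lemma span_Ccone (F : Set E) (R : Set M) (k : ℕ) (flag : Fin (k + 1) → Set E) :
    span ℝ (Ccone a r F R k flag) =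
      (span ℝ ((RF E F).mkQ '' bergCone k flag)).comap (PhibarFR a r F R) := by
  have hzero : (0 : E → ℝ) ∈ bergCone k flag := ⟨0, rfl, fun _ _ _ ↦ le_rfl, by simp⟩
  exact span_preimage_eq ⟨_, mem_image_of_mem _ hzero⟩ fun x _ ↦ PhibarFR_surjective a r F R x

end Projection

theorem Ccone_dim_general (a : E → (M →ₗ[ℝ] ℝ)) (r : E → ℝ) {F : Set E} {R : Set M}
    (hR : F ⊆ posSet a r F R ∪ negSet a r F R) {k : ℕ} {flag : Fin (k + 1) → Set E}
    (hF : F ⊆ flag 0) (hmono : StrictMono flag) :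
    Module.finrank ℝ (span ℝ (Ccone a r F R k flag)) +
        Module.finrank ℝ (span ℝ (a '' zeroSet a r F R)) =
      Module.finrank ℝ (span ℝ (range a)) + k := by
  have hsurj := LinearMap.range_eq_top.2 (PhibarFR_surjective a r F R)
  rw [span_Ccone, finrank_comap_of_le_range (hsurj ▸ le_top),
    finrank_span_mkQ_image_bergCone hF hmono, add_assoc, finrank_ker_PhibarFR_add a r hR, add_comm]

/-- Dimension formula of Theorem 6.1: `dim C^{(F,R)}_𝒻 = d + ℓ(𝒻) − codim R`, where
`codim R = finrank (span {a_e : e ∈ F^0(R)})` and `ℓ(𝒻) = k`. -/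
theorem Ccone_dim
    (a : E → (M →ₗ[ℝ] ℝ)) (r : E → ℝ)
    (ha : ∀ e, a e ≠ 0) (hspan : Submodule.span ℝ (Set.range a) = ⊤)
    (F : Set E) (hF : IsFlat a F) (R : Set M) (hR : IsFace a r F R)
    (k : ℕ) (flag : Fin (k + 1) → Set E)
    (hflat : ∀ i, IsFlat a (flag i)) (hmono : StrictMono flag)
    (h0 : flag 0 = F) (hlast : flag (Fin.last k) = Set.univ) :
    Module.finrank ℝ (Submodule.span ℝ (Ccone a r F R k flag)) =
      Module.finrank ℝ M + k -
        Module.finrank ℝ (Submodule.span ℝ (a '' zeroSet a r F R)) := by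
  have hdim := Ccone_dim_general a r hR.subset_posSet_union_negSet h0.ge hmono
  rw [hspan, finrank_top, Subspace.dual_finrank_eq] at hdim
  exact Nat.eq_sub_of_add_eq hdim

end
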